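/- If P is a generic collection of n points in Ω°, then the genus of the Ω-tropical curve C(G_P 0_Ω) equals n. -/

import Mathlib

open Set

/-- A tropical monomial `c_{ij} + i·x + j·y`. -/
def mon (c : ℤ × ℤ → ℝ) (ij : ℤ × ℤ) (p : ℝ × ℝ) : ℝ :=
  c ij + (ij.1 : ℝ) * p.1 + (ij.2 : ℝ) * p.2

/-- `f` is an `Ω`-tropical series with support `A` and coefficients `c`:
nonnegative on `Ω`, vanishing on `∂Ω`, and on the interior of `Ω` it equals the
(attained) minimum of the monomials `c_{ij} + i·x + j·y`, `(i,j) ∈ A`. -/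
def IsTropSeriesWith (Ω : Set (ℝ × ℝ)) (A : Set (ℤ × ℤ)) (c : ℤ × ℤ → ℝ)
    (f : ℝ × ℝ → ℝ) : Prop :=
  A.Nonempty ∧ (∀ p ∈ Ω, 0 ≤ f p) ∧ (∀ p ∈ frontier Ω, f p = 0) ∧
    ∀ p ∈ interior Ω, IsLeast ((fun ij => mon c ij p) '' A) (f p)

/-- `f` is an `Ω`-tropical series. -/
def IsOmegaTropical (Ω : Set (ℝ × ℝ)) (f : ℝ × ℝ → ℝ) : Prop :=
  ∃ A c, IsTropSeriesWith Ω A c f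

/-- The tropical curve `C(f)`: points of the interior of `Ω` where `f` is not
smooth. -/
def cornerLocus (Ω : Set (ℝ × ℝ)) (f : ℝ × ℝ → ℝ) : Set (ℝ × ℝ) :=
  {p ∈ interior Ω | ¬ DifferentiableAt ℝ f p}

/-- The operator `G_P`: the pointwise infimum of all `Ω`-tropical series `g ≥ f`
whose tropical curve contains `P`. -/
noncomputable def GP (Ω : Set (ℝ × ℝ)) (P : Set (ℝ × ℝ)) (f : ℝ × ℝ → ℝ) :
    ℝ × ℝ → ℝ :=
  fun p => sInf {y | ∃ g, IsOmegaTropical Ω g ∧ (∀ q ∈ Ω, f q ≤ g q) ∧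
    P ⊆ cornerLocus Ω g ∧ y = g p}

/-- The identically zero function on the plane. -/
def zeroFn : ℝ × ℝ → ℝ := fun _ => 0

/-- The genus of `C(f)`: the number of connected components of
`Ω° \ C(f)` whose closure does not meet `∂Ω`. -/
noncomputable def genus (Ω : Set (ℝ × ℝ)) (f : ℝ × ℝ → ℝ) : ℕ :=
  Set.ncard {U : Set (ℝ × ℝ) |
    (∃ p ∈ interior Ω \ cornerLocus Ω f,
      U = connectedComponentIn (interior Ω \ cornerLocus Ω f) p) ∧
    closure U ∩ frontier Ω = ∅}

/-- Two point configurations give tropical curves of the same combinatorial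
type: some homeomorphism of the plane identifies the curves and the points. -/
def SameCombType (Ω : Set (ℝ × ℝ)) (P Q : Finset (ℝ × ℝ)) : Prop :=
  ∃ h : (ℝ × ℝ) ≃ₜ (ℝ × ℝ),
    h '' cornerLocus Ω (GP Ω ↑P zeroFn) = cornerLocus Ω (GP Ω ↑Q zeroFn) ∧
    h '' (P : Set (ℝ × ℝ)) = (Q : Set (ℝ × ℝ))

/-- `P` is generic: any sufficiently small perturbation of the points of `P`
does not change the combinatorial type of the curve `C(G_P 0_Ω)`. -/
def GenericPts (Ω : Set (ℝ × ℝ)) (P : Finset (ℝ × ℝ)) : Prop :=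
  ∃ ε > 0, ∀ g : ℝ × ℝ → ℝ × ℝ,
    (∀ p ∈ P, dist p (g p) < ε) → SameCombType Ω P (P.image g)

namespace TropGenus

theorem mon_continuous (c : ℤ × ℤ → ℝ) (a : ℤ × ℤ) : Continuous (mon c a) := by
  unfold mon; fun_prop

/-- the minimal coefficient making the monomial nonnegative on `Ω`. -/
noncomputable def kO (Ω : Set (ℝ × ℝ)) (a : ℤ × ℤ) : ℝ :=
  sSup ((fun p : ℝ × ℝ => -((a.1 : ℝ) * p.1 + (a.2 : ℝ) * p.2)) '' Ω)

theorem kO_spec {Ω : Set (ℝ × ℝ)} (hc : IsCompact Ω) (hne : Ω.Nonempty) (a : ℤ × ℤ) :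
    (∀ x ∈ Ω, 0 ≤ mon (kO Ω) a x) ∧ ∃ q ∈ Ω, mon (kO Ω) a q = 0 := by
  have hcont : ContinuousOn (fun p : ℝ × ℝ => -((a.1 : ℝ) * p.1 + (a.2 : ℝ) * p.2)) Ω := by
    fun_prop
  obtain ⟨q, hq, hq1, hq2⟩ := hc.exists_sSup_image_eq_and_ge hne hcont
  refine ⟨fun x hx => ?_, q, hq, ?_⟩
  · have := hq2 x hx
    unfold mon kO
    rw [hq1]
    linarith
  · unfold mon kO
    rw [hq1]; ring

theorem mon_combo (c : ℤ × ℤ → ℝ) (a : ℤ × ℤ) (x y : ℝ × ℝ) (s t : ℝ) (h : s + t = 1) :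
    mon c a (s • x + t • y) = s * mon c a x + t * mon c a y := by
  unfold mon
  simp only [Prod.fst_add, Prod.snd_add, Prod.smul_fst, Prod.smul_snd, smul_eq_mul]
  linear_combination (-(c a)) * h

theorem le_of_mon_nonneg {Ω : Set (ℝ × ℝ)} (hc : IsCompact Ω) (hne : Ω.Nonempty)
    {c : ℤ × ℤ → ℝ} {a : ℤ × ℤ} (h : ∀ x ∈ Ω, 0 ≤ mon c a x) : kO Ω a ≤ c a := by
  obtain ⟨_, q, hq, hq0⟩ := kO_spec hc hne a
  have := h q hq
  unfold mon at *
  linarith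

theorem mon_mono {k c : ℤ × ℤ → ℝ} {a : ℤ × ℤ} (h : k a ≤ c a) (x : ℝ × ℝ) :
    mon k a x ≤ mon c a x := by
  unfold mon; linarith

theorem coercive {Ω : Set (ℝ × ℝ)} (hc : IsCompact Ω) {p : ℝ × ℝ}
    (hp : p ∈ interior Ω) (M : ℝ) :
    ∃ F : Finset (ℤ × ℤ), ∀ᶠ x in nhds p, ∀ a ∉ F, M < mon (kO Ω) a x := by
  have hne : Ω.Nonempty := ⟨p, interior_subset hp⟩
  obtain ⟨r, hr, hball⟩ := Metric.isOpen_iff.1 isOpen_interior p hp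
  set N : ℤ := ⌈M / (r/2)⌉ with hN
  refine ⟨Finset.Icc (-N) N ×ˢ Finset.Icc (-N) N, ?_⟩
  filter_upwards [Metric.ball_mem_nhds p (half_pos hr)] with x hx a ha
  have key : ∀ s t : ℝ, |s| ≤ 1 → |t| ≤ 1 →
      (r/2) * (s * a.1 + t * a.2) ≤ mon (kO Ω) a x := by
    intro s t hs ht
    have hy : (x.1 - (r/2) * s, x.2 - (r/2) * t) ∈ Ω := by
      apply interior_subset; apply hball
      rw [Metric.mem_ball, Prod.dist_eq, max_lt_iff] at hx ⊢
      simp only [Real.dist_eq, abs_lt] at hx ⊢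
      rw [abs_le] at hs ht
      refine ⟨⟨?_, ?_⟩, ?_, ?_⟩ <;> nlinarith
    have := (kO_spec hc hne a).1 _ hy
    unfold mon at *
    simp only at this
    nlinarith
  have hNM : M ≤ (r/2) * N := by
    have := Int.le_ceil (M / (r/2))
    rw [div_le_iff₀ (half_pos hr)] at this
    rw [hN]; linarith
  have hlt : ∀ z : ℤ, N < z → M < (r/2) * z := by
    intro z hz
    have : (N:ℝ) < z := by exact_mod_cast hz
    nlinarith
  simp only [Finset.mem_product, Finset.mem_Icc, not_and_or, not_le] at ha
  rcases ha with (h | h) | (h | h)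
  · have := key (-1) 0 (by norm_num) (by norm_num)
    have h2 := hlt (-a.1) (by omega)
    push_cast at h2; linarith
  · have := key 1 0 (by norm_num) (by norm_num)
    have h2 := hlt (a.1) (by omega)
    linarith
  · have := key 0 (-1) (by norm_num) (by norm_num)
    have h2 := hlt (-a.2) (by omega)
    push_cast at h2; linarith
  · have := key 0 1 (by norm_num) (by norm_num)
    have h2 := hlt (a.2) (by omega)
    linarith

/-- active monomials -/
def Act (c : ℤ × ℤ → ℝ) (p : ℝ × ℝ) : Set (ℤ × ℤ) := {a | ∀ b, mon c a p ≤ mon c b p}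

/-- open faces -/
def Uf (Ω : Set (ℝ × ℝ)) (c : ℤ × ℤ → ℝ) (a : ℤ × ℤ) : Set (ℝ × ℝ) :=
  {x ∈ interior Ω | ∀ b, b ≠ a → mon c a x < mon c b x}

theorem coercive' {Ω : Set (ℝ × ℝ)} (hc : IsCompact Ω) {c : ℤ × ℤ → ℝ}
    (hk : ∀ a, kO Ω a ≤ c a) {p : ℝ × ℝ} (hp : p ∈ interior Ω) (M : ℝ) :
    ∃ F : Finset (ℤ × ℤ), ∀ᶠ x in nhds p, ∀ a ∉ F, M < mon c a x := by
  obtain ⟨F, hF⟩ := coercive hc hp M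
  refine ⟨F, hF.mono fun x hx a ha => (hx a ha).trans_le (mon_mono (hk a) x)⟩

theorem exists_act_in {Ω : Set (ℝ × ℝ)} (hc : IsCompact Ω) {c : ℤ × ℤ → ℝ}
    (hk : ∀ a, kO Ω a ≤ c a) {p : ℝ × ℝ} (hp : p ∈ interior Ω) : ∃ a, a ∈ Act c p := by
  obtain ⟨F, hF⟩ := coercive' hc hk hp (mon c 0 p)
  have hF := hF.self_of_nhds
  have h0 : (0 : ℤ × ℤ) ∈ F := by
    by_contra h
    exact lt_irrefl _ (hF 0 h)
  obtain ⟨a, ha, hmin⟩ := F.exists_min_image (fun a => mon c a p) ⟨0, h0⟩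
  refine ⟨a, fun b => ?_⟩
  by_cases hb : b ∈ F
  · exact hmin b hb
  · exact (hmin 0 h0).trans (hF b hb).le

theorem act_finite {Ω : Set (ℝ × ℝ)} (hc : IsCompact Ω) {c : ℤ × ℤ → ℝ}
    (hk : ∀ a, kO Ω a ≤ c a) {p : ℝ × ℝ} (hp : p ∈ interior Ω) : (Act c p).Finite := by
  obtain ⟨F, hF⟩ := coercive' hc hk hp (mon c 0 p)
  have hF := hF.self_of_nhds
  refine F.finite_toSet.subset fun a ha => ?_
  by_contra h
  exact absurd (ha 0) (not_le.2 (hF a h))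

theorem eventually_act {Ω : Set (ℝ × ℝ)} (hc : IsCompact Ω) {c : ℤ × ℤ → ℝ}
    (hk : ∀ a, kO Ω a ≤ c a) {p : ℝ × ℝ} (hp : p ∈ interior Ω) :
    ∀ᶠ x in nhds p, ∀ a ∈ Act c p, ∀ b ∉ Act c p, mon c a x < mon c b x := by
  obtain ⟨a0, ha0⟩ := exists_act_in hc hk hp
  obtain ⟨F, hF⟩ := coercive' hc hk hp (mon c a0 p + 1)
  rw [Filter.eventually_all_finite (act_finite hc hk hp)]
  intro a ha
  have h1 : ∀ᶠ x in nhds p, mon c a x < mon c a0 p + 1 := by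
    apply (mon_continuous c a).continuousAt.eventually_lt_const
    linarith [ha a0]
  have h2 : ∀ᶠ x in nhds p, ∀ b ∈ F, b ∉ Act c p → mon c a x < mon c b x := by
    rw [Filter.eventually_all_finset]
    intro b _
    by_cases hb : b ∈ Act c p
    · exact Filter.Eventually.of_forall fun x h => absurd hb h
    · have : mon c a p < mon c b p := by
        by_contra hcon
        exact hb fun d => (not_lt.1 hcon).trans (ha d)
      filter_upwards [(mon_continuous c a).continuousAt.eventually_lt
        (mon_continuous c b).continuousAt this] with x hx _ using hx
  filter_upwards [h1, h2, hF] with x h1 h2 h3 b hb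
  by_cases hbF : b ∈ F
  · exact h2 b hbF hb
  · exact h1.trans (h3 b hbF)

theorem Uf_open {Ω : Set (ℝ × ℝ)} (hc : IsCompact Ω) {c : ℤ × ℤ → ℝ}
    (hk : ∀ a, kO Ω a ≤ c a) (a : ℤ × ℤ) : IsOpen (Uf Ω c a) := by
  rw [isOpen_iff_mem_nhds]
  rintro p ⟨hp, hpa⟩
  filter_upwards [isOpen_interior.mem_nhds hp, eventually_act hc hk hp] with x hx h
  refine ⟨hx, fun b hb => h a ?_ b ?_⟩
  · intro d
    by_cases hd : d = a
    · rw [hd]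
    · exact (hpa d hd).le
  · intro hb2
    exact absurd (hb2 a) (not_le.2 (hpa b hb))

theorem Uf_convex {Ω : Set (ℝ × ℝ)} (hconv : Convex ℝ Ω) (c : ℤ × ℤ → ℝ)
    (a : ℤ × ℤ) : Convex ℝ (Uf Ω c a) := by
  rintro x ⟨hx, hxa⟩ y ⟨hy, hya⟩ s t hs ht hst
  refine ⟨hconv.interior hx hy hs ht hst, fun b hb => ?_⟩
  rw [mon_combo _ _ _ _ _ _ hst, mon_combo _ _ _ _ _ _ hst]
  have h1 := hxa b hb
  have h2 := hya b hb
  rcases hs.eq_or_lt with h | h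
  · have : t = 1 := by linarith
    subst this; rw [← h]; linarith
  · nlinarith [mul_lt_mul_of_pos_left h1 h, mul_le_mul_of_nonneg_left h2.le ht]

theorem Uf_disj {Ω : Set (ℝ × ℝ)} {c : ℤ × ℤ → ℝ} {a b : ℤ × ℤ} {x : ℝ × ℝ}
    (ha : x ∈ Uf Ω c a) (hb : x ∈ Uf Ω c b) : a = b := by
  by_contra h
  exact lt_asymm (ha.2 b (Ne.symm h)) (hb.2 a h)

theorem Uf_or_two {Ω : Set (ℝ × ℝ)} (hc : IsCompact Ω) {c : ℤ × ℤ → ℝ}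
    (hk : ∀ a, kO Ω a ≤ c a) {p : ℝ × ℝ} (hp : p ∈ interior Ω) :
    (∃ a, p ∈ Uf Ω c a) ∨ ∃ a b, a ≠ b ∧ a ∈ Act c p ∧ b ∈ Act c p := by
  obtain ⟨a, ha⟩ := exists_act_in hc hk hp
  by_cases h : p ∈ Uf Ω c a
  · exact Or.inl ⟨a, h⟩
  · right
    have : ∃ b, b ≠ a ∧ mon c b p ≤ mon c a p := by
      by_contra hcon
      push Not at hcon
      exact h ⟨hp, hcon⟩
    obtain ⟨b, hb, hba⟩ := this
    exact ⟨a, b, hb.symm, ha, fun d => hba.trans (ha d)⟩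

/-- `f` is the minimum of all monomials on the interior. -/
def IsMin (Ω : Set (ℝ × ℝ)) (c : ℤ × ℤ → ℝ) (f : ℝ × ℝ → ℝ) : Prop :=
  ∀ x ∈ interior Ω, (∃ a, f x = mon c a x) ∧ ∀ b, f x ≤ mon c b x

theorem eq_of_act {Ω : Set (ℝ × ℝ)} {c : ℤ × ℤ → ℝ} {f : ℝ × ℝ → ℝ}
    (hf : IsMin Ω c f) {x : ℝ × ℝ} (hx : x ∈ interior Ω) {a : ℤ × ℤ} (ha : a ∈ Act c x) :
    f x = mon c a x := by
  obtain ⟨⟨b, hb⟩, h2⟩ := hf x hx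
  exact le_antisymm (h2 a) (hb ▸ ha b)

theorem act_of_Uf {Ω : Set (ℝ × ℝ)} {c : ℤ × ℤ → ℝ} {x : ℝ × ℝ} {a : ℤ × ℤ}
    (ha : x ∈ Uf Ω c a) : a ∈ Act c x := by
  intro b
  by_cases h : b = a
  · rw [h]
  · exact (ha.2 b h).le

noncomputable def lin (a : ℤ × ℤ) : ℝ × ℝ →L[ℝ] ℝ :=
  (a.1 : ℝ) • ContinuousLinearMap.fst ℝ ℝ ℝ + (a.2 : ℝ) • ContinuousLinearMap.snd ℝ ℝ ℝ

theorem mon_eq_lin (c : ℤ × ℤ → ℝ) (a : ℤ × ℤ) : mon c a = fun x => lin a x + c a := by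
  funext x
  simp [mon, lin]; ring

theorem mon_hasFDerivAt (c : ℤ × ℤ → ℝ) (a : ℤ × ℤ) (x : ℝ × ℝ) :
    HasFDerivAt (mon c a) (lin a) x := by
  rw [mon_eq_lin]
  exact (lin a).hasFDerivAt.add_const _

theorem diff_iff {Ω : Set (ℝ × ℝ)} (hc : IsCompact Ω) {c : ℤ × ℤ → ℝ}
    (hk : ∀ a, kO Ω a ≤ c a) {f : ℝ × ℝ → ℝ} (hf : IsMin Ω c f)
    {p : ℝ × ℝ} (hp : p ∈ interior Ω) :
    DifferentiableAt ℝ f p ↔ ∃ a, p ∈ Uf Ω c a := by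
  constructor
  · intro hd
    rcases Uf_or_two hc hk hp with h | ⟨a, b, hab, ha, hb⟩
    · exact h
    · exfalso
      have key : ∀ d ∈ Act c p, fderiv ℝ f p = lin d := by
        intro d hd'
        have h1 := hd.hasFDerivAt.sub (mon_hasFDerivAt c d p)
        have h2 : IsLocalMax (f - mon c d) p := by
          filter_upwards [isOpen_interior.mem_nhds hp] with x hx
          simp only [Pi.sub_apply]
          rw [eq_of_act hf hp hd']
          linarith [(hf x hx).2 d]
        exact sub_eq_zero.1 (h2.hasFDerivAt_eq_zero h1)
      have h := (key a ha).symm.trans (key b hb)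
      apply hab
      have h1 := DFunLike.congr_fun h (1, 0)
      have h2 := DFunLike.congr_fun h (0, 1)
      simp [lin] at h1 h2
      exact Prod.ext h1 h2
  · rintro ⟨a, ha⟩
    have : f =ᶠ[nhds p] mon c a := by
      filter_upwards [(Uf_open hc hk a).mem_nhds ha] with x hx
      exact eq_of_act hf hx.1 (act_of_Uf hx)
    exact (mon_hasFDerivAt c a p).differentiableAt.congr_of_eventuallyEq this

theorem corner_iff {Ω : Set (ℝ × ℝ)} (hc : IsCompact Ω) {c : ℤ × ℤ → ℝ}
    (hk : ∀ a, kO Ω a ≤ c a) {f : ℝ × ℝ → ℝ} (hf : IsMin Ω c f)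
    {p : ℝ × ℝ} (hp : p ∈ interior Ω) :
    p ∈ cornerLocus Ω f ↔ ∃ a b, a ≠ b ∧ a ∈ Act c p ∧ b ∈ Act c p := by
  have : p ∈ cornerLocus Ω f ↔ ¬ ∃ a, p ∈ Uf Ω c a := by
    rw [← diff_iff hc hk hf hp]
    simp [cornerLocus, hp]
  rw [this]
  constructor
  · intro h
    exact (Uf_or_two hc hk hp).resolve_left h
  · rintro ⟨a, b, hab, ha, hb⟩ ⟨d, hd⟩
    have h : ∀ e ∈ Act c p, e = d := by
      intro e he
      by_contra hne
      exact absurd (he d) (not_le.2 (hd.2 e hne))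
    exact hab ((h a ha).trans (h b hb).symm)

theorem compl_eq {Ω : Set (ℝ × ℝ)} (hc : IsCompact Ω) {c : ℤ × ℤ → ℝ}
    (hk : ∀ a, kO Ω a ≤ c a) {f : ℝ × ℝ → ℝ} (hf : IsMin Ω c f) :
    interior Ω \ cornerLocus Ω f = ⋃ a, Uf Ω c a := by
  ext p
  simp only [mem_sdiff, mem_iUnion]
  constructor
  · rintro ⟨hp, h⟩
    rw [← diff_iff hc hk hf hp]
    by_contra hcon
    exact h ⟨hp, hcon⟩
  · rintro ⟨a, ha⟩
    refine ⟨ha.1, fun h => h.2 ((diff_iff hc hk hf ha.1).2 ⟨a, ha⟩)⟩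

theorem comp_eq {Ω : Set (ℝ × ℝ)} (hconv : Convex ℝ Ω) (hc : IsCompact Ω) {c : ℤ × ℤ → ℝ}
    (hk : ∀ a, kO Ω a ≤ c a) {f : ℝ × ℝ → ℝ} (hf : IsMin Ω c f)
    {p : ℝ × ℝ} {a : ℤ × ℤ} (hp : p ∈ Uf Ω c a) :
    connectedComponentIn (interior Ω \ cornerLocus Ω f) p = Uf Ω c a := by
  rw [compl_eq hc hk hf]
  apply subset_antisymm
  · have hpre := isPreconnected_connectedComponentIn (F := ⋃ a, Uf Ω c a) (x := p)
    apply hpre.subset_left_of_subset_union (Uf_open hc hk a)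
      (v := ⋃ b ∈ {b | b ≠ a}, Uf Ω c b)
    · exact isOpen_biUnion fun b _ => Uf_open hc hk b
    · rw [Set.disjoint_left]
      intro x hx hx2
      simp only [mem_iUnion] at hx2
      obtain ⟨b, hb, hxb⟩ := hx2
      exact hb (Uf_disj hxb hx)
    · intro x hx
      obtain ⟨b, hb⟩ := mem_iUnion.1 (connectedComponentIn_subset _ _ hx)
      by_cases h : b = a
      · left; exact h ▸ hb
      · right; simp only [mem_iUnion]; exact ⟨b, h, hb⟩
    · exact ⟨p, mem_connectedComponentIn (mem_iUnion.2 ⟨a, hp⟩), hp⟩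
  · exact (Uf_convex hconv c a).isPreconnected.subset_connectedComponentIn hp
      (subset_iUnion _ a)

/-- admissible coefficient systems. -/
def KK (Ω : Set (ℝ × ℝ)) (P : Set (ℝ × ℝ)) : Set (ℤ × ℤ → ℝ) :=
  {c | (∀ a, kO Ω a ≤ c a) ∧ ∀ p ∈ P, ∃ a b, a ≠ b ∧ a ∈ Act c p ∧ b ∈ Act c p}

theorem KK_nonempty {Ω : Set (ℝ × ℝ)} (hc : IsCompact Ω) (hne : Ω.Nonempty)
    (P : Finset (ℝ × ℝ)) (hP : ↑P ⊆ Ω) : (KK Ω ↑P).Nonempty := by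
  set h : ℝ × ℝ → ℝ := fun x => -∑ q ∈ P, max 0 (x.1 - q.1) with hh
  have hcont : Continuous h := by rw [hh]; fun_prop
  obtain ⟨z, hz, hzmin⟩ := hc.exists_isMinOn hne hcont.continuousOn
  set M : ℝ := - h z
  have hM : ∀ x ∈ Ω, 0 ≤ h x + M := by
    intro x hx
    have : h z ≤ h x := hzmin hx
    simp only [M]; linarith
  have hex : ∀ a : ℤ × ℤ, ∃ C : ℝ,
      (∀ x ∈ Ω, h x + M ≤ C + a.1 * x.1 + a.2 * x.2) ∧
      ∃ q ∈ Ω, h q + M = C + a.1 * q.1 + a.2 * q.2 := by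
    intro a
    obtain ⟨q, hq, hqmax⟩ := hc.exists_isMaxOn hne
      (f := fun x : ℝ × ℝ => h x + M - (a.1 * x.1 + a.2 * x.2))
      (Continuous.continuousOn (by fun_prop))
    refine ⟨h q + M - (a.1 * q.1 + a.2 * q.2), fun x hx => ?_, q, hq, by ring⟩
    have : h x + M - (a.1 * x.1 + a.2 * x.2) ≤ h q + M - (a.1 * q.1 + a.2 * q.2) := hqmax hx
    linarith
  choose c hc1 hc2 using hex
  refine ⟨c, fun a => le_of_mon_nonneg hc hne fun x hx => (hM x hx).trans (hc1 a x hx), ?_⟩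
  intro p hp
  have hpΩ := hP hp
  have hact : ∀ T : Finset (ℝ × ℝ), T ⊆ P → (∀ q ∈ T, q.1 ≤ p.1) →
      (∀ q ∈ P, q ∉ T → p.1 ≤ q.1) → ((-(T.card : ℤ), 0) : ℤ × ℤ) ∈ Act c p := by
    intro T hT h1 h2 b
    refine le_trans ?_ (hc1 b p hpΩ)
    obtain ⟨q, hq, hqe⟩ := hc2 (-(T.card : ℤ), 0)
    have hle : h q ≤ - ∑ r ∈ T, (q.1 - r.1) := by
      simp only [hh]
      apply neg_le_neg
      calc ∑ r ∈ T, (q.1 - r.1) ≤ ∑ r ∈ T, max 0 (q.1 - r.1) :=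
            Finset.sum_le_sum fun r _ => le_max_right _ _
        _ ≤ ∑ r ∈ P, max 0 (q.1 - r.1) :=
            Finset.sum_le_sum_of_subset_of_nonneg hT fun r _ _ => le_max_left _ _
    have heq : h p = - ∑ r ∈ T, (p.1 - r.1) := by
      simp only [hh]
      congr 1
      rw [← Finset.sum_subset hT (f := fun r => max 0 (p.1 - r.1))]
      · exact Finset.sum_congr rfl fun r hr => max_eq_right (by linarith [h1 r hr])
      · intro r hr hrT
        exact max_eq_left (by linarith [h2 r hr hrT])
    rw [Finset.sum_sub_distrib, Finset.sum_const, nsmul_eq_mul] at hle heq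
    unfold mon
    push_cast at hqe ⊢
    linarith
  classical
  refine ⟨_, _, ?_, hact (P.filter fun q => q.1 ≤ p.1) (Finset.filter_subset _ _) ?_ ?_,
    hact (P.filter fun q => q.1 < p.1) (Finset.filter_subset _ _) ?_ ?_⟩
  · have : (P.filter fun q => q.1 < p.1).card < (P.filter fun q => q.1 ≤ p.1).card := by
      apply Finset.card_lt_card
      refine Finset.ssubset_iff_subset_ne.2 ⟨?_, ?_⟩
      · intro q hq
        rw [Finset.mem_filter] at hq ⊢
        exact ⟨hq.1, hq.2.le⟩
      · intro he
        have : p ∈ P.filter fun q => q.1 ≤ p.1 := Finset.mem_filter.2 ⟨hp, le_rfl⟩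
        rw [← he, Finset.mem_filter] at this
        exact lt_irrefl _ this.2
    intro he
    have := congrArg Prod.fst he
    simp only at this
    omega
  · intro q hq; exact (Finset.mem_filter.1 hq).2
  · intro q hq hqT
    by_contra hcon
    exact hqT (Finset.mem_filter.2 ⟨hq, (not_le.1 hcon).le⟩)
  · intro q hq; exact (Finset.mem_filter.1 hq).2.le
  · intro q hq hqT
    by_contra hcon
    exact hqT (Finset.mem_filter.2 ⟨hq, not_le.1 hcon⟩)

theorem exists_least_KK {Ω : Set (ℝ × ℝ)} (hc : IsCompact Ω) (hne : Ω.Nonempty)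
    (P : Finset (ℝ × ℝ)) (hP : ↑P ⊆ interior Ω) :
    ∃ c ∈ KK Ω ↑P, ∀ c' ∈ KK Ω ↑P, ∀ a, c a ≤ c' a := by
  obtain ⟨c0, hc0⟩ := KK_nonempty hc hne P (hP.trans interior_subset)
  set c : ℤ × ℤ → ℝ := fun a => sInf ((fun c' : ℤ × ℤ → ℝ => c' a) '' KK Ω ↑P) with hcdef
  have hle : ∀ c' ∈ KK Ω ↑P, ∀ a, c a ≤ c' a := by
    intro c' hc' a
    refine csInf_le ⟨kO Ω a, ?_⟩ ⟨c', hc', rfl⟩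
    rintro _ ⟨d, hd, rfl⟩
    exact hd.1 a
  have hk : ∀ a, kO Ω a ≤ c a := by
    intro a
    refine le_csInf ⟨_, c0, hc0, rfl⟩ ?_
    rintro _ ⟨d, hd, rfl⟩
    exact hd.1 a
  refine ⟨c, ⟨hk, fun p hp => ?_⟩, hle⟩
  have hpi := hP hp
  rcases Uf_or_two hc hk hpi with ⟨a, ha⟩ | h
  · exfalso
    -- gap
    have hgap : ∃ δ > 0, ∀ b, b ≠ a → mon c a p + δ ≤ mon c b p := by
      obtain ⟨F, hF⟩ := coercive' hc hk hpi (mon c a p + 1)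
      have hF := hF.self_of_nhds
      have : ∀ᶠ δ in nhdsWithin (0:ℝ) (Ioi 0), ∀ b ∈ F, b ≠ a → mon c a p + δ ≤ mon c b p := by
        rw [Filter.eventually_all_finset]
        intro b _
        by_cases hb : b = a
        · exact Filter.Eventually.of_forall fun x h => absurd hb h
        · have h1 := ha.2 b hb
          have : ∀ᶠ δ in nhdsWithin (0:ℝ) (Ioi 0), δ < mon c b p - mon c a p :=
            Filter.Eventually.filter_mono nhdsWithin_le_nhds (eventually_lt_nhds (by linarith))
          filter_upwards [this] with δ hδ _
          linarith
      have h1 : ∀ᶠ δ in nhdsWithin (0:ℝ) (Ioi 0), δ < 1 :=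
        Filter.Eventually.filter_mono nhdsWithin_le_nhds (eventually_lt_nhds (by norm_num))
      obtain ⟨δ, h2, h3, h4⟩ := (this.and (h1.and self_mem_nhdsWithin)).exists
      refine ⟨δ, h4, fun b hb => ?_⟩
      by_cases hbF : b ∈ F
      · exact h2 b hbF hb
      · linarith [hF b hbF]
    obtain ⟨δ, hδ, hgap⟩ := hgap
    obtain ⟨_, ⟨c', hc', rfl⟩, hlt⟩ := exists_lt_of_csInf_lt
      (s := (fun c' : ℤ × ℤ → ℝ => c' a) '' KK Ω ↑P) ⟨_, c0, hc0, rfl⟩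
      (show sInf _ < c a + δ by simp only [hcdef]; linarith)
    obtain ⟨u, v, huv, hu, hv⟩ := hc'.2 p hp
    have huniq : ∀ w ∈ Act c' p, w = a := by
      intro w hw
      by_contra hwa
      have h1 := hw a
      have h2 := hgap w hwa
      have h3 := mon_mono (hle c' hc' w) p
      have h4 : mon c' a p < mon c a p + δ := by
        unfold mon; simp only at hlt; linarith
      linarith
    exact huv ((huniq u hu).trans (huniq v hv).symm)
  · exact h

theorem ext_series {Ω : Set (ℝ × ℝ)} (hconv : Convex ℝ Ω) (hc : IsCompact Ω)
    (hi : (interior Ω).Nonempty) {g : ℝ × ℝ → ℝ} (hg : IsOmegaTropical Ω g) :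
    ∃ c, (∀ a, kO Ω a ≤ c a) ∧ IsMin Ω c g := by
  obtain ⟨A, c, ⟨a0, ha0⟩, hpos, -, hmin⟩ := hg
  have hne : Ω.Nonempty := hi.mono interior_subset
  classical
  set c' : ℤ × ℤ → ℝ := fun b => if b ∈ A then c b else c a0 + kO Ω (b - a0) with hc'
  have hge : ∀ x ∈ interior Ω, ∀ b, g x ≤ mon c' b x := by
    intro x hx b
    by_cases hb : b ∈ A
    · have := (hmin x hx).2 ⟨b, hb, rfl⟩
      simpa [mon, hc', hb] using this
    · have h1 : g x ≤ mon c a0 x := (hmin x hx).2 ⟨a0, ha0, rfl⟩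
      have h2 := (kO_spec hc hne (b - a0)).1 x (interior_subset hx)
      simp only [mon, hc', hb, if_false, Prod.fst_sub, Prod.snd_sub] at *
      push_cast at h2
      linarith
  refine ⟨c', fun b => le_of_mon_nonneg hc hne fun x hx => ?_, fun x hx => ⟨?_, hge x hx⟩⟩
  · have hx' : x ∈ closure (interior Ω) := by
      rw [hconv.closure_interior_eq_closure_of_nonempty_interior hi]
      exact subset_closure hx
    have hcl : IsClosed {x | 0 ≤ mon c' b x} := isClosed_le continuous_const (mon_continuous c' b)
    exact closure_minimal (fun y hy => (hpos y (interior_subset hy)).trans (hge y hy b)) hcl hx'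
  · obtain ⟨b, hb, hbe⟩ := (hmin x hx).1
    refine ⟨b, ?_⟩
    rw [← hbe]
    simp [mon, hc', hb]

theorem GP_isMin {Ω : Set (ℝ × ℝ)} (hconv : Convex ℝ Ω) (hc : IsCompact Ω)
    (hi : (interior Ω).Nonempty) (P : Finset (ℝ × ℝ)) (hP : ↑P ⊆ interior Ω)
    {c : ℤ × ℤ → ℝ} (hcK : c ∈ KK Ω ↑P) (hleast : ∀ c' ∈ KK Ω ↑P, ∀ a, c a ≤ c' a) :
    IsMin Ω c (GP Ω ↑P zeroFn) := by
  have hne : Ω.Nonempty := hi.mono interior_subset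
  have hk := hcK.1
  classical
  -- the candidate
  have hex : ∀ x ∈ interior Ω, ∃ y, (∃ a, y = mon c a x) ∧ ∀ b, y ≤ mon c b x := by
    intro x hx
    obtain ⟨a, ha⟩ := exists_act_in hc hk hx
    exact ⟨_, ⟨a, rfl⟩, ha⟩
  choose! f0 hf0 using hex
  set f : ℝ × ℝ → ℝ := fun x => if x ∈ interior Ω then f0 x else 0 with hf
  have hfmin : IsMin Ω c f := by
    intro x hx
    simp only [hf, hx, if_true]
    exact hf0 x hx
  have hfpos : ∀ x ∈ Ω, 0 ≤ f x := by
    intro x hx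
    by_cases h : x ∈ interior Ω
    · obtain ⟨a, ha⟩ := (hfmin x h).1
      rw [ha]
      exact ((kO_spec hc hne a).1 x hx).trans (mon_mono (hk a) x)
    · simp [hf, h]
  have hftrop : IsOmegaTropical Ω f := by
    refine ⟨univ, c, univ_nonempty, hfpos, ?_, ?_⟩
    · intro p hp
      have : p ∉ interior Ω := hp.2
      simp [hf, this]
    · intro x hx
      obtain ⟨⟨a, ha⟩, hb⟩ := hfmin x hx
      refine ⟨⟨a, mem_univ _, ha.symm⟩, ?_⟩
      rintro _ ⟨b, -, rfl⟩
      exact hb b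
  have hEq : ∀ x ∈ interior Ω, GP Ω ↑P zeroFn x = f x := by
    intro x hx
    unfold GP
    apply IsLeast.csInf_eq
    refine ⟨⟨f, hftrop, fun q hq => hfpos q hq, ?_, rfl⟩, ?_⟩
    · intro p hp
      rw [corner_iff hc hk hfmin (hP hp)]
      exact hcK.2 p hp
    · rintro _ ⟨g, hg, -, hgP, rfl⟩
      obtain ⟨c', hk', hmin'⟩ := ext_series hconv hc hi hg
      have hK' : c' ∈ KK Ω ↑P :=
        ⟨hk', fun p hp => (corner_iff hc hk' hmin' (hP hp)).1 (hgP hp)⟩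
      obtain ⟨a, ha⟩ := (hmin' x hx).1
      rw [ha]
      exact ((hfmin x hx).2 a).trans (mon_mono (hleast c' hK' a) x)
  intro x hx
  rw [hEq x hx]
  exact hfmin x hx

theorem lowering {Ω : Set (ℝ × ℝ)} (hc : IsCompact Ω)
    {P : Finset (ℝ × ℝ)} (hP : ↑P ⊆ interior Ω)
    {c : ℤ × ℤ → ℝ} (hcK : c ∈ KK Ω ↑P) (hleast : ∀ c' ∈ KK Ω ↑P, ∀ a, c a ≤ c' a)
    (S : Finset (ℤ × ℤ)) (hS : S.Nonempty) (hR : ∀ a ∈ S, kO Ω a < c a) :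
    ∃ p ∈ P, ∃ a ∈ S, a ∈ Act c p ∧ ∀ b ∈ S, b ∈ Act c p → b = a := by
  by_contra hcon
  push Not at hcon
  have e1 : ∀ᶠ t in nhdsWithin (0:ℝ) (Ioi 0), ∀ a ∈ S, t < c a - kO Ω a := by
    rw [Filter.eventually_all_finset]
    intro a ha
    exact Filter.Eventually.filter_mono nhdsWithin_le_nhds
      (eventually_lt_nhds (by linarith [hR a ha]))
  have e2 : ∀ᶠ t in nhdsWithin (0:ℝ) (Ioi 0), ∀ p ∈ P, ∀ d ∈ S, d ∉ Act c p →
      ∀ a ∈ Act c p, t < mon c d p - mon c a p := by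
    rw [Filter.eventually_all_finset]
    intro p hp
    rw [Filter.eventually_all_finset]
    intro d _
    by_cases hd : d ∈ Act c p
    · exact Filter.Eventually.of_forall fun x h => absurd hd h
    · obtain ⟨a0, ha0⟩ := exists_act_in hc hcK.1 (hP hp)
      have : mon c a0 p < mon c d p := by
        by_contra h
        exact hd fun b => (not_lt.1 h).trans (ha0 b)
      have h2 : ∀ᶠ t in nhdsWithin (0:ℝ) (Ioi 0), t < mon c d p - mon c a0 p :=
        Filter.Eventually.filter_mono nhdsWithin_le_nhds (eventually_lt_nhds (by linarith))
      filter_upwards [h2] with t ht _ a ha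
      linarith [ha a0]
  obtain ⟨t, ht1, ht2, ht0⟩ := (e1.and (e2.and self_mem_nhdsWithin)).exists
  have ht0 : 0 < t := ht0
  classical
  set c' : ℤ × ℤ → ℝ := fun a => if a ∈ S then c a - t else c a with hc'
  have hmS : ∀ a ∈ S, ∀ p, mon c' a p = mon c a p - t := by
    intro a ha p
    simp only [mon, hc', ha, if_true]; ring
  have hmN : ∀ a ∉ S, ∀ p, mon c' a p = mon c a p := by
    intro a ha p
    simp only [mon, hc', ha, if_false]
  have hmle : ∀ a p, mon c a p - t ≤ mon c' a p := by
    intro a p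
    by_cases ha : a ∈ S
    · rw [hmS a ha]
    · rw [hmN a ha]; linarith
  have hK' : c' ∈ KK Ω ↑P := by
    refine ⟨fun a => ?_, fun p hp => ?_⟩
    · by_cases ha : a ∈ S
      · simp only [hc', ha, if_true]; linarith [ht1 a ha]
      · simp only [hc', ha, if_false]; exact hcK.1 a
    · by_cases hex : ∃ a ∈ S, a ∈ Act c p
      · obtain ⟨a, haS, ha⟩ := hex
        obtain ⟨b, hbS, hb, hba⟩ := hcon p hp a haS ha
        refine ⟨a, b, hba.symm, fun d => ?_, fun d => ?_⟩
        · rw [hmS a haS]; linarith [ha d, hmle d p]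
        · rw [hmS b hbS]; linarith [hb d, hmle d p]
      · push Not at hex
        obtain ⟨a, b, hab, ha, hb⟩ := hcK.2 p hp
        have key : ∀ e ∈ Act c p, e ∈ Act c' p := by
          intro e he d
          rw [hmN e (fun h => hex e h he)]
          by_cases hd : d ∈ S
          · rw [hmS d hd]
            linarith [ht2 p hp d hd (hex d hd) e he]
          · rw [hmN d hd]; exact he d
        exact ⟨a, b, hab, key a ha, key b hb⟩
  obtain ⟨a, ha⟩ := hS
  have := hleast c' hK' a
  simp only [hc', ha, if_true] at this
  linarith

theorem card_raised {Ω : Set (ℝ × ℝ)} (hc : IsCompact Ω)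
    {P : Finset (ℝ × ℝ)} (hP : ↑P ⊆ interior Ω)
    {c : ℤ × ℤ → ℝ} (hcK : c ∈ KK Ω ↑P) (hleast : ∀ c' ∈ KK Ω ↑P, ∀ a, c a ≤ c' a) :
    {a | kO Ω a < c a}.Finite ∧ {a | kO Ω a < c a}.ncard ≤ P.card := by
  classical
  have key : ∀ n : ℕ, ∀ S : Finset (ℤ × ℤ), S.card = n → (∀ a ∈ S, kO Ω a < c a) →
      S.card ≤ (P.filter fun p => ∃ a ∈ S, a ∈ Act c p).card := by
    intro n
    induction n with
    | zero => intro S hS _; omega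
    | succ n ih =>
      intro S hS hR
      obtain ⟨p, hp, a, haS, ha, huniq⟩ := lowering hc hP hcK hleast S
        (Finset.card_pos.1 (by omega)) hR
      have h1 := ih (S.erase a) (by rw [Finset.card_erase_of_mem haS]; omega)
        (fun b hb => hR b (Finset.mem_of_mem_erase hb))
      have h2 : (P.filter fun p => ∃ b ∈ S.erase a, b ∈ Act c p).card <
          (P.filter fun p => ∃ b ∈ S, b ∈ Act c p).card := by
        apply Finset.card_lt_card
        refine Finset.ssubset_iff_subset_ne.2 ⟨?_, ?_⟩
        · intro q hq
          rw [Finset.mem_filter] at hq ⊢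
          obtain ⟨hq1, b, hb, hb2⟩ := hq
          exact ⟨hq1, b, Finset.mem_of_mem_erase hb, hb2⟩
        · intro he
          have : p ∈ P.filter fun p => ∃ b ∈ S, b ∈ Act c p :=
            Finset.mem_filter.2 ⟨hp, a, haS, ha⟩
          rw [← he, Finset.mem_filter] at this
          obtain ⟨-, b, hb, hb2⟩ := this
          exact (Finset.mem_erase.1 hb).1 (huniq b (Finset.mem_of_mem_erase hb) hb2)
      rw [Finset.card_erase_of_mem haS] at h1
      omega
  have key2 : ∀ S : Finset (ℤ × ℤ), (∀ a ∈ S, kO Ω a < c a) → S.card ≤ P.card :=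
    fun S hS => (key _ S rfl hS).trans (Finset.card_filter_le _ _)
  have hfin : {a | kO Ω a < c a}.Finite := by
    by_contra hinf
    obtain ⟨t, ht, hcard⟩ := Set.Infinite.exists_subset_card_eq hinf (P.card + 1)
    have := key2 t (fun a ha => ht ha)
    omega
  refine ⟨hfin, ?_⟩
  rw [Set.ncard_eq_toFinset_card _ hfin]
  exact key2 _ fun a ha => by simpa using ha

theorem approx_aux (w1 w2 : ℝ) (hw : w1 ≠ 0) {ε : ℝ} (hε : 0 < ε) (M : ℕ) :
    ∃ s : ℝ, 0 ≤ s ∧ ∃ i j : ℤ, (i : ℝ) = s * w1 ∧ |(j : ℝ) - s * w2| ≤ ε ∧ (M : ℤ) < |i| := by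
  obtain ⟨n, hn⟩ := exists_nat_one_div_lt hε
  obtain ⟨j, k, hk, -, hjk⟩ := Real.exists_int_int_abs_mul_sub_le
    (((M : ℝ) + 1) * w2 / |w1|) (Nat.succ_pos n)
  have hw' : 0 < |w1| := abs_pos.2 hw
  have hk' : (0:ℝ) < k := by exact_mod_cast hk
  refine ⟨k * (M + 1) / |w1|, by positivity, (SignType.sign w1 : ℤ) * (k * (M + 1)), j, ?_, ?_, ?_⟩
  · have h1 : ((SignType.sign w1 : ℤ) : ℝ) = w1 / |w1| := by
      rcases lt_or_gt_of_ne hw with h | h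
      · simp [sign_neg h, abs_of_neg h, hw]
      · simp [sign_pos h, abs_of_pos h, hw]
    rw [Int.cast_mul, h1]; push_cast; ring
  · rw [abs_sub_comm]
    have : (k:ℝ) * (M + 1) / |w1| * w2 - j = k * (((M : ℝ) + 1) * w2 / |w1|) - j := by ring
    rw [this]
    refine hjk.trans (le_trans ?_ hn.le)
    push_cast
    apply one_div_le_one_div_of_le <;> linarith [(Nat.cast_nonneg n : (0:ℝ) ≤ n)]
  · have h2 : |((SignType.sign w1 : ℤ))| = 1 := by
      rcases lt_or_gt_of_ne hw with h | h
      · simp [sign_neg h]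
      · simp [sign_pos h]
    rw [abs_mul, h2, one_mul, abs_of_pos (by positivity)]
    nlinarith

theorem approx_aux2 (w : ℝ × ℝ) (hw : w ≠ 0) {ε : ℝ} (hε : 0 < ε) (M : ℕ) :
    ∃ s : ℝ, 0 ≤ s ∧ ∃ b : ℤ × ℤ, |(b.1 : ℝ) - s * w.1| ≤ ε ∧ |(b.2 : ℝ) - s * w.2| ≤ ε ∧
      ((M : ℤ) < |b.1| ∨ (M : ℤ) < |b.2|) := by
  by_cases h : w.1 = 0
  · have h2 : w.2 ≠ 0 := fun h' => hw (Prod.ext h h')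
    obtain ⟨s, hs, i, j, hi, hj, hM⟩ := approx_aux w.2 w.1 h2 hε M
    exact ⟨s, hs, (j, i), hj, by simp only [hi, sub_self, abs_zero]; exact hε.le, Or.inr hM⟩
  · obtain ⟨s, hs, i, j, hi, hj, hM⟩ := approx_aux w.1 w.2 h hε M
    exact ⟨s, hs, (i, j), by simp only [hi, sub_self, abs_zero]; exact hε.le, hj, Or.inl hM⟩

theorem boundary_small {Ω : Set (ℝ × ℝ)} (hconv : Convex ℝ Ω) (hc : IsCompact Ω)
    (hi : (interior Ω).Nonempty) {q : ℝ × ℝ} (hq : q ∈ frontier Ω)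
    {R : Set (ℤ × ℤ)} (hR : R.Finite) {ε : ℝ} (hε : 0 < ε) :
    ∃ b ∉ R, mon (kO Ω) b q < ε := by
  have hne : Ω.Nonempty := hi.mono interior_subset
  have hqΩ : q ∈ Ω := hc.isClosed.frontier_subset hq
  obtain ⟨f, hf⟩ := geometric_hahn_banach_open_point hconv.interior isOpen_interior hq.2
  have hfle : ∀ x ∈ Ω, f x ≤ f q := by
    intro x hx
    have hx' : x ∈ closure (interior Ω) := by
      rw [hconv.closure_interior_eq_closure_of_nonempty_interior hi]
      exact subset_closure hx
    exact closure_minimal (fun y hy => (hf y hy).le)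
      (isClosed_le f.continuous continuous_const) hx'
  set w : ℝ × ℝ := (-f (1, 0), -f (0, 1)) with hw
  have hfw : ∀ x : ℝ × ℝ, f x = -(w.1 * x.1 + w.2 * x.2) := by
    intro x
    have : x = x.1 • ((1, 0) : ℝ × ℝ) + x.2 • ((0, 1) : ℝ × ℝ) := by
      ext <;> simp
    conv_lhs => rw [this]
    rw [map_add, map_smul, map_smul]
    simp only [hw, smul_eq_mul]; ring
  have hw0 : w ≠ 0 := by
    intro h0
    obtain ⟨o, ho⟩ := hi
    have := hf o ho
    rw [hfw, hfw, h0] at this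
    simp at this
  obtain ⟨D, hD⟩ := hc.isBounded.exists_norm_le
  have hD0 : 0 ≤ D := (norm_nonneg _).trans (hD q hqΩ)
  obtain ⟨M, hM⟩ : ∃ M : ℕ, ∀ b ∈ R, |b.1| ≤ (M : ℤ) ∧ |b.2| ≤ (M : ℤ) := by
    obtain ⟨M, hM⟩ := (hR.image fun b : ℤ × ℤ => b.1.natAbs + b.2.natAbs).bddAbove
    refine ⟨M, fun b hb => ?_⟩
    have : b.1.natAbs + b.2.natAbs ≤ M := hM ⟨b, hb, rfl⟩
    rw [Int.abs_eq_natAbs, Int.abs_eq_natAbs]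
    constructor <;> omega
  set η := ε / (4 * D + 1) with hη
  have hηpos : 0 < η := by positivity
  obtain ⟨s, hs, b, hb1, hb2, hbM⟩ := approx_aux2 w hw0 hηpos M
  refine ⟨b, fun hbR => ?_, ?_⟩
  · have := hM b hbR
    omega
  · obtain ⟨-, z, hz, hz0⟩ := kO_spec hc hne b
    have hzf := hfle z hz
    rw [hfw, hfw] at hzf
    have hbd : ∀ x ∈ Ω, |x.1| ≤ D ∧ |x.2| ≤ D := by
      intro x hx
      exact ⟨(norm_fst_le x).trans (hD x hx), (norm_snd_le x).trans (hD x hx)⟩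
    have hd1 : |q.1 - z.1| ≤ 2 * D := by
      have h1 := abs_le.1 (hbd q hqΩ).1
      have h2 := abs_le.1 (hbd z hz).1
      rw [abs_le]; constructor <;> linarith
    have hd2 : |q.2 - z.2| ≤ 2 * D := by
      have h1 := abs_le.1 (hbd q hqΩ).2
      have h2 := abs_le.1 (hbd z hz).2
      rw [abs_le]; constructor <;> linarith
    have e : mon (kO Ω) b q = s * (w.1 * (q.1 - z.1) + w.2 * (q.2 - z.2))
        + (b.1 - s * w.1) * (q.1 - z.1) + (b.2 - s * w.2) * (q.2 - z.2) := by
      have : mon (kO Ω) b q = mon (kO Ω) b q - mon (kO Ω) b z := by rw [hz0]; ring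
      rw [this]; unfold mon; ring
    have t1 : s * (w.1 * (q.1 - z.1) + w.2 * (q.2 - z.2)) ≤ 0 :=
      mul_nonpos_of_nonneg_of_nonpos hs (by linarith)
    have t2 : (b.1 - s * w.1) * (q.1 - z.1) ≤ η * (2 * D) := by
      refine (le_abs_self _).trans ?_
      rw [abs_mul]
      exact mul_le_mul hb1 hd1 (abs_nonneg _) hηpos.le
    have t3 : (b.2 - s * w.2) * (q.2 - z.2) ≤ η * (2 * D) := by
      refine (le_abs_self _).trans ?_
      rw [abs_mul]
      exact mul_le_mul hb2 hd2 (abs_nonneg _) hηpos.le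
    have t4 : η * (4 * D + 1) = ε := by rw [hη]; field_simp
    rw [e]
    linarith

theorem frontier_nonempty' {Ω : Set (ℝ × ℝ)} (hc : IsCompact Ω)
    (hi : (interior Ω).Nonempty) : (frontier Ω).Nonempty := by
  rw [nonempty_frontier_iff]
  refine ⟨hi.mono interior_subset, fun h => ?_⟩
  rw [h] at hc
  exact noncompact_univ (ℝ × ℝ) hc

theorem closure_iff {Ω : Set (ℝ × ℝ)} (hconv : Convex ℝ Ω) (hc : IsCompact Ω)
    (hi : (interior Ω).Nonempty) {c : ℤ × ℤ → ℝ} (hk : ∀ a, kO Ω a ≤ c a)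
    (hR : {a | kO Ω a < c a}.Finite) {a : ℤ × ℤ} (ha : (Uf Ω c a).Nonempty) :
    closure (Uf Ω c a) ∩ frontier Ω = ∅ ↔ kO Ω a < c a := by
  have hne : Ω.Nonempty := hi.mono interior_subset
  constructor
  · intro hemp
    by_contra hcon
    have hca : c a = kO Ω a := le_antisymm (not_lt.1 hcon) (hk a)
    obtain ⟨q, hq, hq0⟩ : ∃ q ∈ frontier Ω, mon (kO Ω) a q = 0 := by
      by_cases h0 : a = 0
      · obtain ⟨q, hq⟩ := frontier_nonempty' hc hi
        obtain ⟨-, z, -, hz⟩ := kO_spec hc hne a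
        refine ⟨q, hq, ?_⟩
        subst h0
        simpa [mon] using hz
      · obtain ⟨hpos, z, hzΩ, hz⟩ := kO_spec hc hne a
        refine ⟨z, ⟨subset_closure hzΩ, fun hzi => h0 ?_⟩, hz⟩
        have hmin : IsLocalMin (mon (kO Ω) a) z := by
          filter_upwards [isOpen_interior.mem_nhds hzi] with x hx
          rw [hz]; exact hpos x (interior_subset hx)
        have h := hmin.hasFDerivAt_eq_zero (mon_hasFDerivAt (kO Ω) a z)
        have h1 := DFunLike.congr_fun h (1, 0)
        have h2 := DFunLike.congr_fun h (0, 1)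
        simp [lin] at h1 h2
        exact Prod.ext h1 h2
    obtain ⟨x, hx, hxa⟩ := ha
    have hseg : openSegment ℝ x q ⊆ Uf Ω c a := by
      intro y hy
      have hyi := hconv.openSegment_interior_closure_subset_interior hx hq.1 hy
      refine ⟨hyi, fun b hb => ?_⟩
      obtain ⟨s, t, hs, ht, hst, rfl⟩ := hy
      rw [mon_combo _ _ _ _ _ _ hst, mon_combo _ _ _ _ _ _ hst]
      have h1 : mon c a q = 0 := by
        rw [← hq0]; unfold mon; rw [hca]
      have h2 : 0 ≤ mon c b q :=
        ((kO_spec hc hne b).1 q (hc.isClosed.frontier_subset hq)).trans (mon_mono (hk b) q)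
      rw [h1]
      have := mul_lt_mul_of_pos_left (hxa b hb) hs
      have := mul_nonneg ht.le h2
      linarith
    have hqc : q ∈ closure (Uf Ω c a) := by
      apply closure_mono hseg
      rw [closure_openSegment]
      exact right_mem_segment ℝ x q
    have : q ∈ (∅ : Set (ℝ × ℝ)) := hemp ▸ ⟨hqc, hq⟩
    exact this
  · intro hlt
    rw [Set.eq_empty_iff_forall_notMem]
    rintro q ⟨hqc, hq⟩
    obtain ⟨b, hbR, hb⟩ := boundary_small hconv hc hi hq hR (sub_pos.2 hlt)
    have hba : b ≠ a := fun h => hbR (h ▸ hlt)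
    have hcb : c b = kO Ω b := le_antisymm (not_lt.1 hbR) (hk b)
    have hcl : IsClosed {x | mon c a x ≤ mon c b x} :=
      isClosed_le (mon_continuous c a) (mon_continuous c b)
    have h1 : mon c a q ≤ mon c b q :=
      closure_minimal (fun x hx => (hx.2 b hba).le) hcl hqc
    have h2 := (kO_spec hc hne a).1 q (hc.isClosed.frontier_subset hq)
    unfold mon at *
    rw [hcb] at h1
    linarith

theorem genus_eq {Ω : Set (ℝ × ℝ)} (hconv : Convex ℝ Ω) (hc : IsCompact Ω)
    (hi : (interior Ω).Nonempty) {c : ℤ × ℤ → ℝ} (hk : ∀ a, kO Ω a ≤ c a)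
    (hR : {a | kO Ω a < c a}.Finite) {f : ℝ × ℝ → ℝ} (hf : IsMin Ω c f) :
    genus Ω f = {a | kO Ω a < c a ∧ (Uf Ω c a).Nonempty}.ncard := by
  have himg : {U : Set (ℝ × ℝ) |
    (∃ p ∈ interior Ω \ cornerLocus Ω f,
      U = connectedComponentIn (interior Ω \ cornerLocus Ω f) p) ∧
    closure U ∩ frontier Ω = ∅} = Uf Ω c '' {a | kO Ω a < c a ∧ (Uf Ω c a).Nonempty} := by
    ext U
    constructor
    · rintro ⟨⟨p, hp, rfl⟩, hcl⟩
      have hp' := hp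
      rw [compl_eq hc hk hf, mem_iUnion] at hp'
      obtain ⟨a, ha⟩ := hp'
      rw [comp_eq hconv hc hk hf ha] at hcl ⊢
      exact ⟨a, ⟨(closure_iff hconv hc hi hk hR ⟨p, ha⟩).1 hcl, ⟨p, ha⟩⟩, rfl⟩
    · rintro ⟨a, ⟨ha, ⟨p, hp⟩⟩, rfl⟩
      refine ⟨⟨p, ?_, (comp_eq hconv hc hk hf hp).symm⟩,
        (closure_iff hconv hc hi hk hR ⟨p, hp⟩).2 ha⟩
      rw [compl_eq hc hk hf, mem_iUnion]
      exact ⟨a, hp⟩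
  unfold genus
  rw [himg]
  apply Set.InjOn.ncard_image
  rintro a ⟨-, ⟨p, hp⟩⟩ b - hab
  have hab : Uf Ω c a = Uf Ω c b := hab
  exact Uf_disj hp (hab ▸ hp)

/-- Bounded components of the complement of a planar set. -/
def bddComps (C : Set (ℝ × ℝ)) : Set (Set (ℝ × ℝ)) :=
  {V | (∃ p ∈ Cᶜ, V = connectedComponentIn Cᶜ p) ∧ Bornology.IsBounded V}

theorem genus_eq_bdd {Ω : Set (ℝ × ℝ)} (hconv : Convex ℝ Ω) (hc : IsCompact Ω)
    (hi : (interior Ω).Nonempty) {f : ℝ × ℝ → ℝ}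
    (hopen : IsOpen (interior Ω \ cornerLocus Ω f)) :
    genus Ω f = (bddComps (cornerLocus Ω f)).ncard := by
  unfold genus
  congr 1
  set C := cornerLocus Ω f with hC
  have hCi : C ⊆ interior Ω := fun x hx => hx.1
  have hDC : interior Ω \ C ⊆ Cᶜ := fun x hx => hx.2
  ext U
  constructor
  · rintro ⟨⟨p, hp, rfl⟩, hcl⟩
    set U := connectedComponentIn (interior Ω \ C) p with hU
    have hUsub : U ⊆ interior Ω \ C := connectedComponentIn_subset _ _
    have hUb : Bornology.IsBounded U :=
      hc.isBounded.subset fun x hx => interior_subset (hUsub hx).1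
    have hpU : p ∈ U := mem_connectedComponentIn hp
    have hclU : closure U ∩ Cᶜ ⊆ U := by
      rintro x ⟨hx, hxC⟩
      have hxΩ : x ∈ closure Ω := closure_mono (fun y hy => interior_subset (hUsub hy).1) hx
      have hxi : x ∈ interior Ω := by
        by_contra h
        have h1 : x ∈ closure U ∩ frontier Ω := ⟨hx, hxΩ, h⟩
        rw [hcl] at h1
        exact h1
      have hpre : IsPreconnected (insert x U) :=
        isPreconnected_connectedComponentIn.subset_closure (subset_insert _ _)
          (insert_subset hx subset_closure)
      exact hpre.subset_connectedComponentIn (mem_insert_of_mem _ hpU)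
        (insert_subset (show x ∈ interior Ω \ C from ⟨hxi, hxC⟩) hUsub) (mem_insert _ _)
    refine ⟨⟨p, hp.2, ?_⟩, hUb⟩
    apply subset_antisymm
    · exact isPreconnected_connectedComponentIn.subset_connectedComponentIn hpU
        (hUsub.trans hDC)
    · have hVpre := isPreconnected_connectedComponentIn (F := Cᶜ) (x := p)
      apply hVpre.subset_left_of_subset_union (hopen.connectedComponentIn)
        (v := (closure U)ᶜ) isClosed_closure.isOpen_compl
      · rw [Set.disjoint_left]
        exact fun x hx hx2 => hx2 (subset_closure hx)
      · intro x hx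
        by_cases h : x ∈ closure U
        · left; exact hclU ⟨h, connectedComponentIn_subset _ _ hx⟩
        · right; exact h
      · exact ⟨p, mem_connectedComponentIn hp.2, hpU⟩
  · rintro ⟨⟨p, hp, rfl⟩, hb⟩
    set V := connectedComponentIn Cᶜ p with hV
    have hpV : p ∈ V := mem_connectedComponentIn hp
    obtain ⟨o, ho⟩ := hi
    have hVi : V ⊆ interior Ω := by
      intro w hw
      by_contra hwi
      have hwo : w - o ≠ 0 := by
        intro h; rw [sub_eq_zero] at h; exact hwi (h ▸ ho)
      set ray : ℝ → ℝ × ℝ := fun t => w + t • (w - o) with hray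
      have hraypre : IsPreconnected (ray '' Ici 0) :=
        isPreconnected_Ici.image _ (Continuous.continuousOn (by fun_prop))
      have hrayC : ray '' Ici 0 ⊆ Cᶜ := by
        rintro _ ⟨t, ht, rfl⟩ hin
        have ht : 0 ≤ t := ht
        apply hwi
        have h1 : (0:ℝ) < 1 + t := by linarith
        have := hconv.interior ho (hCi hin) (a := t / (1 + t)) (b := 1 / (1 + t))
          (by positivity) (by positivity) (by field_simp; ring)
        convert this using 1
        simp only [hray]
        ext <;> simp <;> field_simp <;> ring
      have hsub : ray '' Ici 0 ⊆ V := by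
        have e : V = connectedComponentIn Cᶜ w := connectedComponentIn_eq hw
        rw [e]
        exact hraypre.subset_connectedComponentIn ⟨0, by simp, by simp [hray]⟩ hrayC
      obtain ⟨D, hD⟩ := (hb.subset hsub).exists_norm_le
      have hn : 0 < ‖w - o‖ := norm_pos_iff.2 hwo
      have h0 := hD w ⟨0, by simp, by simp [hray]⟩
      set t : ℝ := (2 * |D| + 1) / ‖w - o‖ with ht
      have ht0 : 0 ≤ t := by positivity
      have h1 := hD (ray t) ⟨t, ht0, rfl⟩
      have h2 : ‖t • (w - o)‖ ≤ ‖ray t‖ + ‖w‖ := by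
        have : t • (w - o) = ray t - w := by simp [hray]
        rw [this]; exact norm_sub_le _ _
      rw [norm_smul, Real.norm_of_nonneg ht0, ht, div_mul_cancel₀ _ hn.ne'] at h2
      linarith [le_abs_self D]
    have hVD : V ⊆ interior Ω \ C :=
      fun x hx => ⟨hVi hx, connectedComponentIn_subset _ _ hx⟩
    refine ⟨⟨p, hVD hpV, ?_⟩, ?_⟩
    · apply subset_antisymm
      · exact isPreconnected_connectedComponentIn.subset_connectedComponentIn hpV hVD
      · exact connectedComponentIn_mono _ hDC
    · rw [Set.eq_empty_iff_forall_notMem]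
      rintro q ⟨hqc, hq⟩
      have hqC : q ∈ Cᶜ := fun h => hq.2 (hCi h)
      have hpre : IsPreconnected (insert q V) :=
        isPreconnected_connectedComponentIn.subset_closure (subset_insert _ _)
          (insert_subset hqc subset_closure)
      have : q ∈ V := hpre.subset_connectedComponentIn (mem_insert_of_mem _ hpV)
        (insert_subset hqC (connectedComponentIn_subset _ _)) (mem_insert _ _)
      exact hq.2 (hVi this)

theorem bdd_image (h : (ℝ × ℝ) ≃ₜ (ℝ × ℝ)) {V : Set (ℝ × ℝ)} (hV : Bornology.IsBounded V) :
    Bornology.IsBounded (h '' V) :=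
  (hV.isCompact_closure.image h.continuous).isBounded.subset (image_mono subset_closure)

theorem bddComps_image (h : (ℝ × ℝ) ≃ₜ (ℝ × ℝ)) (C : Set (ℝ × ℝ)) :
    (fun V => h '' V) '' bddComps C ⊆ bddComps (h '' C) := by
  rintro _ ⟨_, ⟨⟨p, hp, rfl⟩, hb⟩, rfl⟩
  refine ⟨⟨h p, ?_, ?_⟩, bdd_image h hb⟩
  · rw [← image_compl_eq h.bijective]; exact ⟨p, hp, rfl⟩
  · show h '' _ = _
    rw [h.image_connectedComponentIn hp, image_compl_eq h.bijective]

theorem bddComps_ncard (h : (ℝ × ℝ) ≃ₜ (ℝ × ℝ)) (C : Set (ℝ × ℝ)) :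
    (bddComps (h '' C)).ncard = (bddComps C).ncard := by
  have : bddComps (h '' C) = (fun V => h '' V) '' bddComps C := by
    apply subset_antisymm _ (bddComps_image h C)
    intro V hV
    have := bddComps_image h.symm (h '' C) ⟨V, hV, rfl⟩
    refine ⟨h.symm '' V, ?_, ?_⟩
    · simpa [image_image] using this
    · simp [image_image]
  rw [this]
  exact (Set.image_injective.2 h.injective).injOn.ncard_image

theorem two_faces {Ω : Set (ℝ × ℝ)} (hc : IsCompact Ω) {c : ℤ × ℤ → ℝ}
    (hk : ∀ a, kO Ω a ≤ c a) {p : ℝ × ℝ} (hp : p ∈ interior Ω)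
    (h2 : ∃ a b, a ≠ b ∧ a ∈ Act c p ∧ b ∈ Act c p) :
    ∃ a b, a ≠ b ∧ mon c a p = mon c b p ∧ (Uf Ω c a).Nonempty ∧ (Uf Ω c b).Nonempty := by
  set φ : ℤ × ℤ → ℝ := fun a => a.1 + a.2 * Real.sqrt 2 with hφ
  have hinj : Function.Injective φ := by
    intro a b hab
    simp only [hφ] at hab
    have h : ((a.2 - b.2 : ℤ) : ℝ) * Real.sqrt 2 = ((b.1 - a.1 : ℤ) : ℝ) := by
      push_cast; linarith
    have h0 : a.2 - b.2 = 0 := by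
      by_contra hne
      exact (irrational_sqrt_two.intCast_mul hne).ne_int _ h
    have h02 : a.2 = b.2 := by omega
    rw [h02] at hab
    exact Prod.ext (by exact_mod_cast (add_right_cancel hab)) h02
  -- for a sign σ, the σ-minimal active monomial has a face
  have key : ∀ σ : ℝ, σ ≠ 0 → ∀ a ∈ Act c p, (∀ b ∈ Act c p, σ * φ a ≤ σ * φ b) →
      (Uf Ω c a).Nonempty := by
    intro σ hσ a ha hmin
    have hcont : Filter.Tendsto (fun t : ℝ => p + (t * σ) • ((1, Real.sqrt 2) : ℝ × ℝ))
        (nhdsWithin 0 (Ioi 0)) (nhds p) := by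
      have : Continuous (fun t : ℝ => p + (t * σ) • ((1, Real.sqrt 2) : ℝ × ℝ)) := by fun_prop
      have h := this.tendsto 0
      simp only [zero_mul, zero_smul, add_zero] at h
      exact h.mono_left nhdsWithin_le_nhds
    obtain ⟨t, h1, h2, ht⟩ := ((hcont.eventually (eventually_act hc hk hp)).and
      ((hcont.eventually (isOpen_interior.mem_nhds hp)).and self_mem_nhdsWithin)).exists
    have ht : 0 < t := ht
    refine ⟨_, h2, fun b hb => ?_⟩
    by_cases hbA : b ∈ Act c p
    · have e : ∀ d, mon c d (p + (t * σ) • ((1, Real.sqrt 2) : ℝ × ℝ))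
          = mon c d p + t * (σ * φ d) := by
        intro d
        simp [mon, hφ]; ring
      rw [e, e]
      have h3 : σ * φ a < σ * φ b := by
        refine lt_of_le_of_ne (hmin b hbA) fun he => hb ?_
        exact (hinj (mul_left_cancel₀ hσ he)).symm
      have := ha b
      have := mul_lt_mul_of_pos_left h3 ht
      linarith
    · exact h1 a ha b hbA
  obtain ⟨u, v, huv, hu, hv⟩ := h2
  have hfin := act_finite hc hk hp
  obtain ⟨a, ha, hamin⟩ := Set.exists_min_image _ φ hfin ⟨u, hu⟩
  obtain ⟨b, hb, hbmax⟩ := Set.exists_max_image _ φ hfin ⟨u, hu⟩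
  refine ⟨a, b, ?_, le_antisymm (ha b) (hb a), key 1 one_ne_zero a ha ?_, key (-1) (by norm_num) b hb ?_⟩
  · rintro rfl
    apply huv
    apply hinj
    linarith [hamin u hu, hamin v hv, hbmax u hu, hbmax v hv]
  · intro d hd; linarith [hamin d hd]
  · intro d hd; linarith [hbmax d hd]

theorem dense_avoid {ι : Type} [Fintype ι] (k : ℤ × ℤ → ℝ) (M : Finset (ℤ × ℤ))
    (β γ : ι → ℤ × ℤ) (hβγ : ∀ i, β i ≠ γ i) (hcard : M.card < Fintype.card ι) :
    ∃ O : Set (ι → ℝ × ℝ), IsOpen O ∧ Dense O ∧ ∀ x ∈ O, ∀ c : ℤ × ℤ → ℝ,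
      (∀ a ∉ M, c a = k a) → ¬ ∀ i, mon c (β i) (x i) = mon c (γ i) (x i) := by
  classical
  set ext : (M → ℝ) →ₗ[ℝ] (ℤ × ℤ → ℝ) :=
    { toFun := fun u a => if h : a ∈ M then u ⟨a, h⟩ else 0
      map_add' := by
        intro u v; funext a
        by_cases h : a ∈ M <;> simp [h]
      map_smul' := by
        intro r u; funext a
        by_cases h : a ∈ M <;> simp [h] } with hext
  set L : (M → ℝ) →ₗ[ℝ] (ι → ℝ) :=
    { toFun := fun u i => ext u (γ i) - ext u (β i)
      map_add' := by
        intro u v; funext i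
        simp only [map_add, Pi.add_apply]; ring
      map_smul' := by
        intro r u; funext i
        simp only [map_smul, Pi.smul_apply, smul_eq_mul, RingHom.id_apply]; ring } with hL
  have hlt : LinearMap.range L < ⊤ := by
    rw [lt_top_iff_ne_top]
    intro htop
    have h1 := LinearMap.finrank_range_le L
    rw [htop, finrank_top, Module.finrank_fintype_fun_eq_card,
      Module.finrank_fintype_fun_eq_card, Fintype.card_coe] at h1
    omega
  obtain ⟨l, hl0, hl⟩ := Submodule.exists_le_ker_of_lt_top _ hlt
  set Φ : (ι → ℝ × ℝ) →ₗ[ℝ] (ι → ℝ) :=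
    LinearMap.pi fun i => ((lin (β i) - lin (γ i)).toLinearMap.comp (LinearMap.proj i)) with hΦ
  have hΦs : ∀ i (x : ι → ℝ × ℝ), Φ x i = lin (β i) (x i) - lin (γ i) (x i) := by
    intro i x; simp [hΦ]
  obtain ⟨y, hy⟩ : ∃ y, l (Φ y) ≠ 0 := by
    obtain ⟨w, hw⟩ : ∃ w, l w ≠ 0 := by
      by_contra h
      push Not at h
      exact hl0 (LinearMap.ext h)
    have : ∀ i, ∃ z : ℝ × ℝ, lin (β i) z - lin (γ i) z = w i := by
      intro i
      by_cases h1 : (β i).1 = (γ i).1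
      · have h2 : (β i).2 ≠ (γ i).2 := fun h2 => hβγ i (Prod.ext h1 h2)
        have h3 : ((β i).2 : ℝ) - (γ i).2 ≠ 0 := sub_ne_zero.2 (by exact_mod_cast h2)
        refine ⟨(0, w i / (((β i).2 : ℝ) - (γ i).2)), ?_⟩
        simp only [lin, add_apply, smul_apply,
          ContinuousLinearMap.coe_fst', ContinuousLinearMap.coe_snd', smul_eq_mul]
        field_simp; ring
      · have h3 : ((β i).1 : ℝ) - (γ i).1 ≠ 0 := sub_ne_zero.2 (by exact_mod_cast h1)
        refine ⟨(w i / (((β i).1 : ℝ) - (γ i).1), 0), ?_⟩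
        simp only [lin, add_apply, smul_apply,
          ContinuousLinearMap.coe_fst', ContinuousLinearMap.coe_snd', smul_eq_mul]
        field_simp; ring
    choose z hz using this
    refine ⟨z, ?_⟩
    have : Φ z = w := by funext i; rw [hΦs, hz]
    rwa [this]
  set k0 : ℤ × ℤ → ℝ := fun a => if a ∈ M then 0 else k a with hk0
  set r : ℝ := l (fun i => k0 (γ i) - k0 (β i)) with hr
  set ψ : (ι → ℝ × ℝ) →ₗ[ℝ] ℝ := l.comp Φ with hψ
  have hψc : Continuous ψ := ψ.continuous_of_finiteDimensional
  refine ⟨{x | ψ x ≠ r}, isOpen_ne_fun hψc continuous_const, ?_, ?_⟩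
  · intro x
    by_cases hx : ψ x = r
    · have hcont : Filter.Tendsto (fun t : ℝ => x + t • y) (nhdsWithin 0 (Ioi 0)) (nhds x) := by
        have : Continuous (fun t : ℝ => x + t • y) := by fun_prop
        have h := this.tendsto 0
        simp only [zero_smul, add_zero] at h
        exact h.mono_left nhdsWithin_le_nhds
      refine mem_closure_of_tendsto hcont ?_
      filter_upwards [self_mem_nhdsWithin] with t ht
      have ht : 0 < t := ht
      show ψ (x + t • y) ≠ r
      rw [map_add, map_smul, hx, smul_eq_mul]
      intro h
      have : t * ψ y = 0 := by linarith
      rcases mul_eq_zero.1 this with h | h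
      · exact ht.ne' h
      · exact hy h
    · exact subset_closure hx
  · intro x hx c hcM heq
    apply hx
    have hce : ∀ a, c a = ext (fun m => c m) a + k0 a := by
      intro a
      by_cases h : a ∈ M
      · simp [hext, hk0, h]
      · simp [hext, hk0, h, hcM a h]
    have h1 : Φ x = L (fun m => c m) + fun i => k0 (γ i) - k0 (β i) := by
      funext i
      have h2 := heq i
      rw [mon_eq_lin, mon_eq_lin] at h2
      simp only at h2
      rw [hΦs]
      have h3 : L (fun m => c m) i = ext (fun m => c m) (γ i) - ext (fun m => c m) (β i) := rfl
      rw [Pi.add_apply, h3]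
      linarith [hce (β i), hce (γ i)]
    show l (Φ x) = r
    rw [h1, map_add]
    have : l (L (fun m => c m)) = 0 := hl ⟨_, rfl⟩
    rw [this, zero_add]

theorem exists_good {ι : Type} [Finite ι] [Fintype ι] (k : ℤ × ℤ → ℝ) {W : Set (ι → ℝ × ℝ)}
    (hW : IsOpen W) (hne : W.Nonempty) :
    ∃ x ∈ W, ∀ M : Finset (ℤ × ℤ), M.card < Fintype.card ι → ∀ β γ : ι → ℤ × ℤ,
      (∀ i, β i ≠ γ i) → ∀ c : ℤ × ℤ → ℝ, (∀ a ∉ M, c a = k a) →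
      ¬ ∀ i, mon c (β i) (x i) = mon c (γ i) (x i) := by
  let T := {d : Finset (ℤ × ℤ) × (ι → ℤ × ℤ) × (ι → ℤ × ℤ) //
    d.1.card < Fintype.card ι ∧ ∀ i, d.2.1 i ≠ d.2.2 i}
  have hT : ∀ d : T, _ := fun d => dense_avoid k d.1.1 d.1.2.1 d.1.2.2 d.2.2 d.2.1
  choose O hO1 hO2 hO3 using hT
  have hd := dense_iInter_of_isOpen hO1 hO2
  obtain ⟨x, hxW, hx⟩ := hd.inter_open_nonempty W hW hne
  refine ⟨x, hxW, fun M hM β γ hβγ c hc => ?_⟩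
  exact hO3 ⟨(M, β, γ), hM, hβγ⟩ x (mem_iInter.1 hx _) c hc

end TropGenus

open TropGenus

/-- If `P` is a generic collection of `n` points in `Ω°`, then the genus of
the `Ω`-tropical curve `C(G_P 0_Ω)` equals `n`. -/
theorem genus_eq_card (Ω : Set (ℝ × ℝ)) (hconv : Convex ℝ Ω)
    (hcomp : IsCompact Ω) (P : Finset (ℝ × ℝ)) (hP : ↑P ⊆ interior Ω)
    (hgen : GenericPts Ω P) :
    genus Ω (GP Ω ↑P zeroFn) = P.card := by

  classical
  rcases (interior Ω).eq_empty_or_nonempty with hemp | hi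
  · have hP0 : P = ∅ := by
      rw [hemp] at hP
      exact Finset.coe_eq_empty.1 (subset_empty_iff.1 hP)
    rw [hP0, Finset.card_empty]
    unfold genus
    rw [hemp]
    simp
  have hne : Ω.Nonempty := hi.mono interior_subset
  -- structure of the minimal series
  have hstruct : ∀ Q : Finset (ℝ × ℝ), ↑Q ⊆ interior Ω →
      ∃ c ∈ KK Ω ↑Q, {a | kO Ω a < c a}.Finite ∧ {a | kO Ω a < c a}.ncard ≤ Q.card ∧
        genus Ω (GP Ω ↑Q zeroFn) = {a | kO Ω a < c a ∧ (Uf Ω c a).Nonempty}.ncard ∧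
        genus Ω (GP Ω ↑Q zeroFn) = (bddComps (cornerLocus Ω (GP Ω ↑Q zeroFn))).ncard := by
    intro Q hQ
    obtain ⟨c, hcK, hleast⟩ := exists_least_KK hcomp hne Q hQ
    have hmin := GP_isMin hconv hcomp hi Q hQ hcK hleast
    obtain ⟨hfin, hcard⟩ := card_raised hcomp hQ hcK hleast
    refine ⟨c, hcK, hfin, hcard, genus_eq hconv hcomp hi hcK.1 hfin hmin,
      genus_eq_bdd hconv hcomp hi ?_⟩
    rw [compl_eq hcomp hcK.1 hmin]
    exact isOpen_iUnion fun a => Uf_open hcomp hcK.1 a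
  obtain ⟨ε, hε, hgen⟩ := hgen
  obtain ⟨x, ⟨hxε, hxi⟩, hx⟩ := exists_good (ι := P) (kO Ω)
    (W := {x : P → ℝ × ℝ | (∀ i : P, dist (i : ℝ × ℝ) (x i) < ε)} ∩ {x : P → ℝ × ℝ | ∀ i : P, x i ∈ interior Ω})
    (by
      apply IsOpen.inter
      · simp only [ofPred_forall]
        exact isOpen_iInter_of_finite fun i => isOpen_lt (by fun_prop) continuous_const
      · simp only [ofPred_forall]
        exact isOpen_iInter_of_finite fun i => isOpen_interior.preimage (continuous_apply i))
    ⟨fun i => i, fun i => by simpa using hε, fun i => hP i.2⟩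
  set g : ℝ × ℝ → ℝ × ℝ := fun p => if h : p ∈ P then x ⟨p, h⟩ else p with hg
  have hgx : ∀ i : P, g i = x i := fun i => by simp [hg]
  obtain ⟨h, hC, hPQ⟩ := hgen g fun p hp => by
    rw [hgx ⟨p, hp⟩]; exact hxε ⟨p, hp⟩
  set Q := P.image g with hQdef
  have hQ : ↑Q ⊆ interior Ω := by
    intro q hq
    obtain ⟨p, hp, rfl⟩ := Finset.mem_image.1 hq
    rw [hgx ⟨p, hp⟩]; exact hxi ⟨p, hp⟩
  have hcardQ : Q.card = P.card := by
    rw [← Set.ncard_coe_finset Q, ← hPQ, h.injective.injOn.ncard_image, Set.ncard_coe_finset]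
  obtain ⟨_, _, _, _, _, hgP⟩ := hstruct P hP
  obtain ⟨c, hcK, hfin, hcard, hgQ, hgQ'⟩ := hstruct Q hQ
  rw [hgP, ← bddComps_ncard h, hC, ← hgQ', hgQ]
  set MM := {a | kO Ω a < c a ∧ (Uf Ω c a).Nonempty} with hMM
  have hMfin : MM.Finite := hfin.subset fun a ha => ha.1
  have hle : MM.ncard ≤ P.card :=
    ((Set.ncard_le_ncard (fun a ha => ha.1) hfin).trans hcard).trans_eq hcardQ
  refine le_antisymm hle ?_
  by_contra hlt
  have hfaces : ∀ i : P, ∃ a b, a ≠ b ∧ mon c a (x i) = mon c b (x i) ∧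
      (Uf Ω c a).Nonempty ∧ (Uf Ω c b).Nonempty := by
    intro i
    apply two_faces hcomp hcK.1 (hxi i)
    apply hcK.2
    rw [← hgx i]
    exact Finset.mem_coe.2 (Finset.mem_image_of_mem g i.2)
  choose β γ hβγ heq hβ hγ using hfaces
  have hM : ∀ a, a ∈ hMfin.toFinset ↔ a ∈ MM := fun a => hMfin.mem_toFinset
  set c' : ℤ × ℤ → ℝ := fun a => if a ∈ MM then c a else kO Ω a with hc'
  have hcc : ∀ a, (Uf Ω c a).Nonempty → c' a = c a := by
    intro a ha
    by_cases h : a ∈ MM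
    · simp [hc', h]
    · have : c a = kO Ω a := by
        refine le_antisymm (not_lt.1 fun hlt => h ⟨hlt, ha⟩) (hcK.1 a)
      simp [hc', this]
  refine hx hMfin.toFinset ?_ β γ hβγ c' ?_ ?_
  · rw [← Set.ncard_eq_toFinset_card _ hMfin, Fintype.card_coe]
    omega
  · intro a ha
    rw [hM] at ha
    simp [hc', ha]
  · intro i
    have := heq i
    unfold mon at this ⊢
    rw [hcc _ (hβ i), hcc _ (hγ i)]
    exact this
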